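/- Let (X,d) be a complete semimetric space with at least 3 points and with a triangle function Φ continuous at (0,0) and satisfying Condition (1) and Condition (2). Let T : X → X be a mapping contracting perimeters of triangles on X, and suppose T has no periodic points of prime period 2, i.e. there is no x ∈ X with T(T(x)) = x and Tx ≠ x. Then T has a fixed point, and the number of fixed points of T is at most two. -/

import Mathlib

/-!
If `T` has no fixed point, then, there being no points of prime period 2, any three consecutive
points of an orbit `x n = T^[n] x₀` are pairwise distinct, so the perimeters of these triangles
decay like `α ^ n`, and so do the distances `d (x n) (x (n + 1))`. Iterating the generalized triangle
inequality bounds `d (x n) (x (n + m + 1))` by a multiple of `nestPhi Φ α n m`, which by homogeneity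
is `α ^ n * nestPhi Φ α 0 m`; Condition (2) makes the orbit Cauchy. For infinitely many `n` both
`x n` and `x (n + 1)` differ from the limit `x'`, and contraction of the triangle
`x n, x (n + 1), x'` together with continuity of `Φ` at the origin gives `d x' (T x') = 0`, a
contradiction. Three distinct fixed points would form a triangle whose perimeter is not contracted.
-/

open NNReal Filter Topology

/-- A semimetric on `X`: `d x y = 0` iff `x = y`, and `d` is symmetric. -/
def IsSemimetric {X : Type*} (d : X → X → ℝ≥0) : Prop :=
  (∀ x y, d x y = 0 ↔ x = y) ∧ (∀ x y, d x y = d y x)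

/-- `Φ` is a triangle function for the semimetric `d`: symmetric, nondecreasing in both
arguments, `Φ 0 0 = 0`, and the generalized triangle inequality holds. -/
def IsTriangleFn {X : Type*} (d : X → X → ℝ≥0) (Φ : ℝ≥0 → ℝ≥0 → ℝ≥0) : Prop :=
  (∀ u v, Φ u v = Φ v u) ∧
  (∀ u₁ u₂ v₁ v₂, u₁ ≤ u₂ → v₁ ≤ v₂ → Φ u₁ v₁ ≤ Φ u₂ v₂) ∧
  Φ 0 0 = 0 ∧
  (∀ x y z : X, d x y ≤ Φ (d x z) (d z y))

/-- Condition (1): `Φ (k*u) (k*v) = k * Φ u v`. -/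
def Cond1 (Φ : ℝ≥0 → ℝ≥0 → ℝ≥0) : Prop :=
  ∀ k u v : ℝ≥0, Φ (k * u) (k * v) = k * Φ u v

/-- `nestPhi Φ a k m` is `Φ (a^k, Φ (a^(k+1), …, Φ (a^(k+m-1), a^(k+m))))`;
in particular `nestPhi Φ a 0 p = Φ (1, Φ (a, Φ (a², …, Φ (a^(p-1), a^p))))`. -/
def nestPhi (Φ : ℝ≥0 → ℝ≥0 → ℝ≥0) (a : ℝ≥0) : ℕ → ℕ → ℝ≥0
  | k, 0 => a ^ k
  | k, m + 1 => Φ (a ^ k) (nestPhi Φ a (k + 1) m)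

/-- Condition (2): for every `a ∈ [0,1)` there is `C(a) > 0` bounding all nested expressions. -/
def Cond2 (Φ : ℝ≥0 → ℝ≥0 → ℝ≥0) : Prop :=
  ∀ a : ℝ≥0, a < 1 → ∃ C : ℝ≥0, 0 < C ∧ ∀ p : ℕ, 1 ≤ p → nestPhi Φ a 0 p ≤ C

/-- `(x n)` is a Cauchy sequence for the semimetric `d`. -/
def IsCauchySeq {X : Type*} (d : X → X → ℝ≥0) (x : ℕ → X) : Prop :=
  ∀ ε : ℝ≥0, 0 < ε → ∃ N : ℕ, ∀ m n : ℕ, N ≤ m → N ≤ n → d (x m) (x n) < ε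

/-- The semimetric space `(X, d)` is complete: every Cauchy sequence has a limit. -/
def IsCompleteSemimetric {X : Type*} (d : X → X → ℝ≥0) : Prop :=
  ∀ x : ℕ → X, IsCauchySeq d x → ∃ x₀ : X, Tendsto (fun n => d (x n) x₀) atTop (𝓝 0)

/-- `T` is a mapping contracting perimeters of triangles on `(X, d)`: there is `α ∈ [0,1)`
such that the perimeter inequality holds for all pairwise distinct points. -/
def ContractsPerimeters {X : Type*} (d : X → X → ℝ≥0) (T : X → X) : Prop :=
  ∃ α : ℝ≥0, α < 1 ∧ ∀ x y z : X, x ≠ y → y ≠ z → x ≠ z →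
    d (T x) (T y) + d (T y) (T z) + d (T x) (T z) ≤ α * (d x y + d y z + d x z)

theorem nestPhi_shift {Φ : ℝ≥0 → ℝ≥0 → ℝ≥0} (h1 : Cond1 Φ) (a : ℝ≥0) (m : ℕ) :
    ∀ k, nestPhi Φ a k m = a ^ k * nestPhi Φ a 0 m := by
  induction m with
  | zero => intro k; simp [nestPhi]
  | succ m ih =>
    intro k
    simp only [nestPhi]
    rw [ih (k + 1), ih (0 + 1), ← h1]
    congr 1 <;> ring

/-- The generalized triangle inequality along a sequence with geometrically decaying steps. -/
theorem dist_le_nestPhi {X : Type*} {d : X → X → ℝ≥0} {Φ : ℝ≥0 → ℝ≥0 → ℝ≥0}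
    (hΦ : IsTriangleFn d Φ) (h1 : Cond1 Φ) {x : ℕ → X} {a K : ℝ≥0}
    (hx : ∀ n, d (x n) (x (n + 1)) ≤ K * a ^ n) (m : ℕ) :
    ∀ n, d (x n) (x (n + m + 1)) ≤ K * nestPhi Φ a n m := by
  induction m with
  | zero => intro n; simpa [nestPhi] using hx n
  | succ m ih =>
    intro n
    have h := ih (n + 1)
    rw [show n + 1 + m + 1 = n + (m + 1) + 1 by ring] at h
    calc d (x n) (x (n + (m + 1) + 1))
        ≤ Φ (d (x n) (x (n + 1))) (d (x (n + 1)) (x (n + (m + 1) + 1))) := hΦ.2.2.2 _ _ _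
      _ ≤ Φ (K * a ^ n) (K * nestPhi Φ a (n + 1) m) := hΦ.2.1 _ _ _ _ (hx n) h
      _ = K * nestPhi Φ a n (m + 1) := by rw [h1]; rfl

theorem tendsto_const_mul_pow {a : ℝ≥0} (ha : a < 1) (K : ℝ≥0) :
    Tendsto (fun n : ℕ => K * a ^ n) atTop (𝓝 0) := by
  simpa using (NNReal.tendsto_pow_atTop_nhds_zero_of_lt_one ha).const_mul K

/-- Geometrically decaying steps make a sequence Cauchy, thanks to Conditions (1) and (2). -/
theorem isCauchySeq_of_geometric {X : Type*} {d : X → X → ℝ≥0} {Φ : ℝ≥0 → ℝ≥0 → ℝ≥0}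
    (hd : IsSemimetric d) (hΦ : IsTriangleFn d Φ) (h1 : Cond1 Φ) (h2 : Cond2 Φ)
    {x : ℕ → X} {a K : ℝ≥0} (ha : a < 1)
    (hx : ∀ n, d (x n) (x (n + 1)) ≤ K * a ^ n) : IsCauchySeq d x := by
  obtain ⟨C, -, hC⟩ := h2 a ha
  -- Condition (2) only speaks of `p ≥ 1`; the value `nestPhi Φ a 0 0 = 1` is covered by `max C 1`.
  have hC' : ∀ p, nestPhi Φ a 0 p ≤ max C 1 := by
    rintro (_ | p)
    · simp [nestPhi]
    · exact (hC _ (by omega)).trans (le_max_left _ _)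
  intro ε hε
  obtain ⟨N, hN⟩ := ((tendsto_const_mul_pow ha (K * max C 1)).eventually_lt_const hε).exists
  have key : ∀ m n, N ≤ m → m ≤ n → d (x m) (x n) < ε := by
    intro m n hm hmn
    rcases hmn.eq_or_lt with rfl | hlt
    · rwa [(hd.1 _ _).2 rfl]
    obtain ⟨k, rfl⟩ := Nat.exists_eq_add_of_lt hlt
    calc d (x m) (x (m + k + 1)) ≤ K * nestPhi Φ a m k := dist_le_nestPhi hΦ h1 hx k m
      _ = K * (a ^ m * nestPhi Φ a 0 k) := by rw [nestPhi_shift h1]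
      _ ≤ K * (a ^ N * max C 1) := by
        exact mul_le_mul_right (mul_le_mul' (pow_le_pow_of_le_one zero_le ha.le hm) (hC' k)) K
      _ = K * max C 1 * a ^ N := by ring
      _ < ε := hN
  refine ⟨N, fun m n hm hn => ?_⟩
  rcases le_total m n with h | h
  · exact key m n hm h
  · rw [hd.2]; exact key n m hn h

theorem stmt_19 {X : Type*} (d : X → X → ℝ≥0) (Φ : ℝ≥0 → ℝ≥0 → ℝ≥0)
    (hcard : ∃ a b c : X, a ≠ b ∧ b ≠ c ∧ a ≠ c)
    (hd : IsSemimetric d) (hΦ : IsTriangleFn d Φ)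
    (hΦcont : ContinuousAt (fun p : ℝ≥0 × ℝ≥0 => Φ p.1 p.2) (0, 0))
    (h1 : Cond1 Φ) (h2 : Cond2 Φ)
    (hcomp : IsCompleteSemimetric d)
    (T : X → X) (hT : ContractsPerimeters d T)
    (hper : ¬∃ x : X, T (T x) = x ∧ T x ≠ x) :
    (∃ z : X, T z = z) ∧
      ∀ a b c : X, T a = a → T b = b → T c = c → a = b ∨ a = c ∨ b = c := by
  obtain ⟨α, hα, hT⟩ := hT
  obtain ⟨hd0, hds⟩ := id hd
  refine ⟨?_, ?_⟩
  · by_contra! hfix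
    obtain ⟨x₀, -⟩ := hcard
    set x : ℕ → X := fun n => T^[n] x₀ with hxdef
    have hxs : ∀ n, x (n + 1) = T (x n) := fun n => Function.iterate_succ_apply' T n x₀
    have hne1 : ∀ n, x n ≠ x (n + 1) := fun n h => hfix (x n) (by rw [← hxs, ← h])
    have hne2 : ∀ n, x n ≠ x (n + 2) := fun n h =>
      hper ⟨x n, by rw [← hxs, ← hxs]; exact h.symm, hfix _⟩
    set P : ℕ → ℝ≥0 := fun n =>
      d (x n) (x (n + 1)) + d (x (n + 1)) (x (n + 2)) + d (x n) (x (n + 2)) with hP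
    have hPs : ∀ n, P (n + 1) ≤ α * P n := by
      intro n
      have h := hT (x n) (x (n + 1)) (x (n + 2)) (hne1 n) (hne1 (n + 1)) (hne2 n)
      simpa only [← hxs] using h
    have hPn : ∀ n, P n ≤ P 0 * α ^ n := by
      intro n
      induction n with
      | zero => simp
      | succ n ih =>
        calc P (n + 1) ≤ α * P n := hPs n
          _ ≤ α * (P 0 * α ^ n) := by gcongr
          _ = P 0 * α ^ (n + 1) := by ring
    have hstep : ∀ n, d (x n) (x (n + 1)) ≤ P 0 * α ^ n := fun n =>
      (le_add_right le_self_add).trans (hPn n)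
    obtain ⟨x', hx'⟩ := hcomp x (isCauchySeq_of_geometric hd hΦ h1 h2 hα hstep)
    have hx1 : Tendsto (fun n => d (x (n + 1)) x') atTop (𝓝 0) :=
      hx'.comp (tendsto_add_atTop_nat 1)
    have hb : Tendsto (fun n => α * (P 0 * α ^ n + d (x (n + 1)) x' + d (x n) x')) atTop (𝓝 0) := by
      simpa using (((tendsto_const_mul_pow hα (P 0)).add hx1).add hx').const_mul α
    have hg : Tendsto (fun n => Φ (d (x (n + 1)) x')
        (α * (P 0 * α ^ n + d (x (n + 1)) x' + d (x n) x'))) atTop (𝓝 0) := by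
      have h := hΦcont.tendsto.comp (hx1.prodMk_nhds hb)
      simpa only [Function.comp_def, hΦ.2.2.1] using h
    have hle : ∀ n, x n ≠ x' → x (n + 1) ≠ x' → d x' (T x') ≤ Φ (d (x (n + 1)) x')
        (α * (P 0 * α ^ n + d (x (n + 1)) x' + d (x n) x')) := by
      intro n hn hn1
      have h := hT (x n) (x (n + 1)) x' (hne1 n) hn1 hn
      refine (hΦ.2.2.2 x' (T x') (x (n + 1))).trans (hΦ.2.1 _ _ _ _ (hds _ _).le ?_)
      calc d (x (n + 1)) (T x') = d (T (x n)) (T x') := by rw [hxs]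
        _ ≤ _ := le_add_self
        _ ≤ _ := h
        _ ≤ _ := by gcongr; exact hstep n
    -- Among `x n, x (n + 1), x (n + 2), x (n + 3)` two consecutive points avoid `x'`.
    have hfreq : ∃ᶠ n in atTop, x n ≠ x' ∧ x (n + 1) ≠ x' := by
      refine frequently_atTop.2 fun n => ?_
      by_cases ha : x n = x'
      · exact ⟨n + 1, by omega, ha ▸ (hne1 n).symm, ha ▸ (hne2 n).symm⟩
      by_cases hb : x (n + 1) = x'
      · exact ⟨n + 2, by omega, hb ▸ (hne1 (n + 1)).symm, hb ▸ (hne2 (n + 1)).symm⟩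
      exact ⟨n, le_rfl, ha, hb⟩
    have hz : d x' (T x') ≤ 0 :=
      ge_of_tendsto_of_frequently hg (hfreq.mono fun n hn => hle n hn.1 hn.2)
    exact hfix x' ((hd0 _ _).1 (le_antisymm hz zero_le)).symm
  · intro a b c ha hb hc
    by_contra! hne
    obtain ⟨hab, hac, hbc⟩ := hne
    have h := hT a b c hab hbc hac
    rw [ha, hb, hc] at h
    have hpos : 0 < d a b + d b c + d a c :=
      add_pos_of_pos_of_nonneg (add_pos_of_pos_of_nonneg
        (pos_iff_ne_zero.2 fun h => hab ((hd0 _ _).1 h)) zero_le) zero_le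
    exact absurd h (not_le.2 (mul_lt_of_lt_one_left hpos hα))
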